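/- If I_k is a minimum-weight common independent set of size k of matroids M₁ and M₂ (not necessarily unique), then the exchange graph 𝓔(M₁,M₂,I_k) contains no directed cycle of negative weight with respect to the vertex weights l. -/

import Mathlib

/-- `I` is a common independent set of the matroids `M₁` and `M₂`. -/
def CommonIndep {α : Type*} (M₁ M₂ : Matroid α) (I : Finset α) : Prop :=
  M₁.Indep ↑I ∧ M₂.Indep ↑I

/-- The weight `W(I) = ∑_{s ∈ I} W(s)` of a set. -/
def setW {α : Type*} (W : α → ℤ) (I : Finset α) : ℤ := ∑ x ∈ I, W x

/-- Adjacency in the exchange graph `𝓔(M₁,M₂,I)`: for `y ∈ I` and `x ∉ I` there is an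
edge `(y,x)` iff `(I \ {y}) ∪ {x} ∈ 𝓘₁`, and an edge `(x,y)` iff `(I \ {y}) ∪ {x} ∈ 𝓘₂`. -/
def ExchAdj {α : Type*} [DecidableEq α] (M₁ M₂ : Matroid α) (I : Finset α) (u v : α) : Prop :=
  (u ∈ I ∧ v ∉ I ∧ M₁.Indep ↑(insert v (I.erase u))) ∨
  (u ∉ I ∧ v ∈ I ∧ M₂.Indep ↑(insert u (I.erase v)))

/-- The vertex weights of the exchange graph: `l(s) = -W(s)` if `s ∈ I`, else `l(s) = W(s)`. -/
def exchWt {α : Type*} [DecidableEq α] (W : α → ℤ) (I : Finset α) (s : α) : ℤ :=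
  if s ∈ I then -W s else W s

/-- The weight of a walk/path/cycle given by the vertex list `l`: the sum of the vertex
weights over `l`. -/
def listW {α : Type*} [DecidableEq α] (W : α → ℤ) (I : Finset α) (l : List α) : ℤ :=
  (l.map (exchWt W I)).sum

/-- `l` is (the vertex list of) a simple directed cycle for the adjacency relation `Adj`. -/
def IsCycle {α : Type*} (Adj : α → α → Prop) (l : List α) : Prop :=
  ∃ h : l ≠ [], l.Chain' Adj ∧ Adj (l.getLast h) (l.head h) ∧ l.Nodup

/-- `x ∈ X₁`, i.e. `x ∉ I` and `I ∪ {x} ∈ 𝓘₁` (and analogously for `X₂` with `M₂`). -/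
def memX {α : Type*} [DecidableEq α] (M : Matroid α) (I : Finset α) (x : α) : Prop :=
  x ∉ I ∧ M.Indep ↑(insert x I)

/-- `l` is (the vertex list of) a simple directed path from `X₁` to `X₂` in the exchange
graph `𝓔(M₁,M₂,I)`. -/
def IsXPath {α : Type*} [DecidableEq α] (M₁ M₂ : Matroid α) (I : Finset α) (l : List α) : Prop :=
  ∃ h : l ≠ [], l.Chain' (ExchAdj M₁ M₂ I) ∧ l.Nodup ∧
    memX M₁ I (l.head h) ∧ memX M₂ I (l.getLast h)

/-- `I` is a minimum-weight common independent set of size `k` (not necessarily unique). -/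
def IsMinWtOfSize {α : Type*} (M₁ M₂ : Matroid α) (W : α → ℤ) (k : ℕ) (I : Finset α) : Prop :=
  CommonIndep M₁ M₂ I ∧ I.card = k ∧
    ∀ J : Finset α, CommonIndep M₁ M₂ J → J.card = k → setW W I ≤ setW W J

/-- `W` isolates the size-`k` common independent set `I`: `I` is the unique minimum-weight
common independent set of size `k`. -/
def Isolates {α : Type*} (M₁ M₂ : Matroid α) (W : α → ℤ) (k : ℕ) (I : Finset α) : Prop :=
  CommonIndep M₁ M₂ I ∧ I.card = k ∧
    ∀ J : Finset α, CommonIndep M₁ M₂ J → J.card = k → J ≠ I → setW W I < setW W J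

/-!
Among the negative cycles take one, `C`, with fewest vertices. Rank each vertex of `C` by the weight
of the initial segment of `C` ending at it, ties being broken by position. An edge of the exchange
graph from `u` to the successor of another vertex `v` of `C` closes up a shorter cycle, and that
cycle having nonnegative weight says precisely that `v` has smaller rank than `u`. So the exchanges
along `C` are triangular in each of the two matroids, whence `I ∆ C` is independent in both. It has
the size of `I` but smaller weight, contradicting the minimality of `I`.
-/

open scoped symmDiff List

section Exchange

variable {α ι β : Type*} [Preorder β] {M : Matroid α} {I : Set α} {s : Set ι} {x y : ι → α}

theorem indep_exchange_of_rank (hI : M.Indep I) (hs : s.Finite) (r : ι → β)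
    (hx : ∀ i ∈ s, x i ∉ I) (hxy : ∀ i ∈ s, M.Indep (insert (x i) (I \ {y i})))
    (hr : ∀ i ∈ s, ∀ j ∈ s, i ≠ j → M.Indep (insert (x j) (I \ {y i})) → r j < r i) :
    M.Indep (I \ y '' s ∪ x '' s) := by
  have hxE : ∀ i ∈ s, x i ∈ M.E := fun i hi => (hxy i hi).subset_ground (Set.mem_insert _ _)
  by_contra hdep
  have hground : I \ y '' s ∪ x '' s ⊆ M.E :=
    Set.union_subset (Set.sdiff_subset.trans hI.subset_ground) (Set.image_subset_iff.2 hxE)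
  obtain ⟨C, hCJ, hC⟩ := ((Matroid.not_indep_iff hground).1 hdep).exists_isCircuit_subset
  have hmeets : {i ∈ s | x i ∈ C}.Nonempty := by
    by_contra! hempty
    refine hC.not_indep (hI.subset fun z hz => ?_)
    obtain hzI | ⟨i, hi, rfl⟩ := hCJ hz
    · exact hzI.1
    · exact absurd (show i ∈ {i ∈ s | x i ∈ C} from ⟨hi, hz⟩) (hempty ▸ Set.notMem_empty i)
  obtain ⟨j, ⟨hjs, hjC⟩, hmin⟩ := (hs.sep (x · ∈ C)).exists_minimalFor r _ hmeets
  have hIj : M.Indep (I \ {y j}) := hI.subset Set.sdiff_subset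
  have hnotMem (i : ι) (hi : i ∈ s) : x i ∉ I \ {y j} := fun h => hx i hi h.1
  -- By minimality of `r j`, every other element of the circuit is spanned by `I \ {y j}`.
  have hspan : C \ {x j} ⊆ M.closure (I \ {y j}) := by
    rintro z ⟨hzC, hzj⟩
    obtain ⟨hzI, hzy⟩ | ⟨i, hi, rfl⟩ := hCJ hzC
    · exact M.mem_closure_of_mem ⟨hzI, fun h => hzy (h ▸ Set.mem_image_of_mem y hjs)⟩
        hIj.subset_ground
    · by_contra hcl
      have hlt : r i < r j := hr j hjs i hi (fun h => hzj (h ▸ rfl))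
        ((hIj.notMem_closure_iff_of_notMem (hnotMem i hi) (hxE i hi)).1 hcl)
      exact hlt.not_ge (hmin ⟨hi, hzC⟩ hlt.le)
  exact (hIj.notMem_closure_iff_of_notMem (hnotMem j hjs) (hxE j hjs)).2 (hxy j hjs)
    (M.closure_subset_closure_of_subset_closure hspan
      (hC.mem_closure_sdiff_singleton_of_mem hjC))

end Exchange

section Cycle

variable {α : Type*} {Adj : α → α → Prop} {s t : List α}

theorem IsCycle.nodup {l : List α} (h : IsCycle Adj l) : l.Nodup :=
  h.choose_spec.2.2

theorem IsCycle.append_comm (h : IsCycle Adj (s ++ t)) : IsCycle Adj (t ++ s) := by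
  rcases eq_or_ne s [] with rfl | hs
  · simpa only [List.nil_append, List.append_nil] using h
  rcases eq_or_ne t [] with rfl | ht
  · simpa only [List.nil_append, List.append_nil] using h
  obtain ⟨_, hchain, hclose, hnodup⟩ := h
  rw [List.getLast_append_of_ne_nil _ ht, List.head_append_of_ne_nil hs] at hclose
  obtain ⟨hchain_s, hchain_t, hjoin⟩ := List.isChain_append.1 hchain
  refine ⟨List.append_ne_nil_of_right_ne_nil _ hs, List.isChain_append.2 ⟨hchain_t, hchain_s, ?_⟩,
    ?_, List.nodup_append_comm.1 hnodup⟩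
  · intro u hu v hv
    rw [List.getLast?_eq_getLast_of_ne_nil ht, Option.mem_some_iff] at hu
    rw [List.head?_eq_some_head hs, Option.mem_some_iff] at hv
    exact hu ▸ hv ▸ hclose
  · rw [List.getLast_append_of_ne_nil _ hs, List.head_append_of_ne_nil ht]
    exact hjoin _ (List.getLast_mem_getLast? hs) _ (List.head_mem_head? ht)

theorem IsCycle.of_isRotated {l l' : List α} (h : IsCycle Adj l) (hrot : l ~r l') :
    IsCycle Adj l' := by
  obtain ⟨n, rfl⟩ := hrot
  rw [List.rotate_eq_drop_append_take_mod]
  exact IsCycle.append_comm (by rwa [List.take_append_drop])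

variable [DecidableEq α] {l : List α}

theorem formPerm_getLast (hl : l ≠ []) : l.formPerm (l.getLast hl) = l.head hl := by
  cases l with
  | nil => exact absurd rfl hl
  | cons a l => exact List.formPerm_apply_getLast a l

theorem IsCycle.adj_formPerm (h : IsCycle Adj l) {v : α} (hv : v ∈ l) :
    Adj v (l.formPerm v) := by
  obtain ⟨s, t, rfl⟩ := List.append_of_mem hv
  have hrot : s ++ v :: t ~r t ++ (s ++ [v]) := by
    simpa using List.isRotated_append (l := s ++ [v]) (l' := t)
  obtain ⟨hne, -, hclose, -⟩ := h.of_isRotated hrot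
  rw [List.formPerm_eq_of_isRotated h.nodup hrot]
  rw [← formPerm_getLast hne] at hclose
  simpa using hclose

theorem IsCycle.of_chord {u v : α} (h : IsCycle Adj l) (hrot : l ~r s ++ [u] ++ (t ++ [v]))
    (huv : Adj u (l.formPerm v)) : IsCycle Adj (s ++ [u]) := by
  rw [List.formPerm_eq_of_isRotated h.nodup hrot] at huv
  obtain ⟨hne, hchain, -, hnodup⟩ := h.of_isRotated hrot
  have hsu : s ++ [u] ≠ [] := List.concat_ne_nil u s
  have hnext : (s ++ [u] ++ (t ++ [v])).formPerm v = (s ++ [u]).head hsu := by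
    rw [← List.head_append_of_ne_nil (w₁ := hne) hsu, ← formPerm_getLast hne,
      List.getLast_append_of_ne_nil _ (List.concat_ne_nil v t), List.getLast_concat]
  refine ⟨hsu, hchain.left_of_append, ?_, hnodup.of_append_left⟩
  rwa [List.getLast_concat, ← hnext]

/-- The rank of a vertex `v` of the cycle with vertex list `l`: the `w`-weight of the initial
segment of `l` that ends at `v`, with ties broken by the position of `v`. It orders the exchanges
along a shortest negative cycle. -/
def prefixRank {G : Type*} [AddMonoid G] (w : α → G) (l : List α) (v : α) : G ×ₗ ℕ :=
  toLex (((l.take (l.idxOf v + 1)).map w).sum, l.idxOf v)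

theorem prefixRank_append_cons {G : Type*} [AddMonoid G] (w : α → G) {v : α} (hv : v ∉ s) :
    prefixRank w (s ++ v :: t) v = toLex ((s.map w).sum + w v, s.length) := by
  have hlen : (s ++ [v]).length = s.length + 1 := List.length_append
  have hidx : (s ++ v :: t).idxOf v = s.length := by
    rw [List.idxOf_append_of_notMem hv, List.idxOf_cons_self, add_zero]
  rw [prefixRank, hidx, List.append_cons, List.take_left' hlen]
  simp only [List.map_append, List.map_cons, List.map_nil, List.sum_append, List.sum_singleton]

theorem IsCycle.prefixRank_lt_of_chord {G : Type*} [AddCommMonoid G] [LinearOrder G]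
    [IsOrderedCancelAddMonoid G] {w : α → G} (hl : IsCycle Adj l) (hneg : (l.map w).sum < 0)
    (hshort : ∀ l', IsCycle Adj l' → l'.length < l.length → 0 ≤ (l'.map w).sum)
    {u v : α} (hu : u ∈ l) (hv : v ∈ l) (huv : u ≠ v) (hadj : Adj u (l.formPerm v)) :
    prefixRank w l v < prefixRank w l u := by
  have hnodup : l.Nodup := hl.nodup
  obtain ⟨a, b, rfl⟩ := List.append_of_mem hv
  obtain hua | hub : u ∈ a ∨ u ∈ b := by simpa [huv] using hu
  · -- Closing the cycle with the chord skips `b' ++ [v]`, whose weight is therefore negative.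
    obtain ⟨a, b', rfl⟩ := List.append_of_mem hua
    have hrot : a ++ u :: b' ++ v :: b ~r b ++ a ++ [u] ++ (b' ++ [v]) := by
      simpa using List.isRotated_append (l := a ++ u :: b' ++ [v]) (l' := b)
    have hnonneg := hshort _ (hl.of_chord hrot hadj) (by grind)
    have hv' : v ∉ a ++ u :: b' := by grind
    have hu' : u ∉ a := by grind
    rw [prefixRank_append_cons w hv', List.append_assoc, List.cons_append,
      prefixRank_append_cons w hu', Prod.Lex.toLex_lt_toLex]
    left
    have hskip : ((b' ++ [v]).map w).sum < 0 := by
      rw [(hrot.perm.map w).sum_eq, List.map_append, List.sum_append] at hneg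
      exact lt_of_not_ge fun h => hneg.not_ge (add_nonneg hnonneg h)
    calc ((a ++ u :: b').map w).sum + w v
        = (a.map w).sum + w u + ((b' ++ [v]).map w).sum := by simp [add_assoc]
      _ < (a.map w).sum + w u := add_lt_of_neg_right _ hskip
  · -- The chord closes up `b ++ [u]`, whose weight is therefore nonnegative.
    obtain ⟨b, c, rfl⟩ := List.append_of_mem hub
    have hrot : a ++ v :: (b ++ u :: c) ~r b ++ [u] ++ (c ++ a ++ [v]) := by
      simpa using List.isRotated_append (l := a ++ [v]) (l' := b ++ u :: c)
    have hnonneg := hshort _ (hl.of_chord hrot hadj) (by grind)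
    have hv' : v ∉ a := by grind
    have hu' : u ∉ a ++ v :: b := by grind
    rw [prefixRank_append_cons w hv', ← List.cons_append, ← List.append_assoc,
      prefixRank_append_cons w hu', Prod.Lex.toLex_lt_toLex']
    refine ⟨?_, fun _ => by simp⟩
    calc (a.map w).sum + w v
        ≤ (a.map w).sum + w v + ((b ++ [u]).map w).sum := le_add_of_nonneg_right hnonneg
      _ = ((a ++ v :: b).map w).sum + w u := by simp [add_assoc]

end Cycle

section ExchangeGraph

variable {α : Type*} [DecidableEq α] {M₁ M₂ : Matroid α} {I C : Finset α}

theorem setW_symmDiff (W : α → ℤ) :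
    setW W (I ∆ C) = setW W I + ∑ z ∈ C, exchWt W I z := by
  have hdisj : Disjoint (I \ C) (C \ I) := disjoint_sdiff_sdiff
  have hC : ∑ z ∈ C, exchWt W I z = ∑ z ∈ C \ I, W z - ∑ z ∈ I ∩ C, W z := by
    simp only [exchWt, Finset.sum_ite, Finset.sum_neg_distrib, Finset.filter_mem_eq_inter,
      Finset.filter_notMem_eq_sdiff, Finset.inter_comm C I]
    ring
  rw [symmDiff_def, Finset.sup_eq_union, setW, setW, Finset.sum_union hdisj, hC,
    ← Finset.sum_inter_add_sum_sdiff I C]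
  ring

theorem ExchAdj.mem_iff_notMem {u v : α} (h : ExchAdj M₁ M₂ I u v) : u ∈ I ↔ v ∉ I := by
  rcases h with ⟨hu, hv, -⟩ | ⟨hu, hv, -⟩ <;> simp only [hu, hv, not_true, not_false_eq_true]

variable {σ : Equiv.Perm α}

theorem image_inter_eq_sdiff_of_alternating (hC : ∀ v, σ v ∈ C ↔ v ∈ C)
    (hσ : ∀ v ∈ C, v ∈ I ↔ σ v ∉ I) : (C ∩ I).image σ = C \ I := by
  ext z
  obtain ⟨v, rfl⟩ := σ.surjective z
  simp only [Finset.mem_image, σ.injective.eq_iff, exists_eq_right, Finset.mem_inter,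
    Finset.mem_sdiff, hC]
  exact and_congr_right (hσ v)

theorem card_symmDiff_of_alternating (hC : ∀ v, σ v ∈ C ↔ v ∈ C)
    (hσ : ∀ v ∈ C, v ∈ I ↔ σ v ∉ I) : (I ∆ C).card = I.card := by
  have hswap : (C \ I).card = (I ∩ C).card := by
    rw [← image_inter_eq_sdiff_of_alternating hC hσ, Finset.card_image_of_injective _ σ.injective,
      Finset.inter_comm]
  rw [symmDiff_def, Finset.sup_eq_union, Finset.card_union_of_disjoint disjoint_sdiff_sdiff, hswap,
    Finset.card_sdiff_add_card_inter]

variable {β : Type*} [Preorder β]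

theorem indep_symmDiff_of_rank (hI : M₁.Indep I) (hC : ∀ v, σ v ∈ C ↔ v ∈ C)
    (hσ : ∀ v ∈ C, ExchAdj M₁ M₂ I v (σ v)) (r : α → β)
    (hr : ∀ u ∈ C, ∀ v ∈ C, u ≠ v → ExchAdj M₁ M₂ I u (σ v) → r v < r u) :
    M₁.Indep ↑(I ∆ C) := by
  have halt (v : α) (hv : v ∈ C) : v ∈ I ↔ σ v ∉ I := (hσ v hv).mem_iff_notMem
  have himage : σ '' ↑(C ∩ I) = (C \ I : Set α) := by
    exact_mod_cast image_inter_eq_sdiff_of_alternating hC halt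
  have hout (v : α) (hv : v ∈ C ∩ I) : σ v ∉ I :=
    (halt v (Finset.mem_inter.1 hv).1).1 (Finset.mem_inter.1 hv).2
  have hadj (u v : α) (hu : u ∈ C ∩ I) (hv : v ∈ C ∩ I) :
      ExchAdj M₁ M₂ I u (σ v) ↔ M₁.Indep (insert (σ v) (I \ {u})) := by
    simp only [ExchAdj, (Finset.mem_inter.1 hu).2, hout v hv, not_true_eq_false,
      not_false_eq_true, true_and, false_and, or_false, Finset.coe_insert, Finset.coe_erase]
  have hexchange : M₁.Indep (I \ id '' ↑(C ∩ I) ∪ σ '' ↑(C ∩ I)) :=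
    indep_exchange_of_rank hI (C ∩ I).finite_toSet r hout
      (fun v hv => (hadj v v hv hv).1 (hσ v (Finset.mem_inter.1 hv).1))
      fun u hu v hv huv h => hr u (Finset.mem_inter.1 hu).1 v (Finset.mem_inter.1 hv).1 huv
        ((hadj u v hu hv).2 h)
  rw [Set.image_id, himage] at hexchange
  simpa [symmDiff_def] using hexchange

theorem exchAdj_swap {u v : α} : ExchAdj M₂ M₁ I u v ↔ ExchAdj M₁ M₂ I v u := by
  unfold ExchAdj
  tauto

theorem commonIndep_symmDiff_of_rank (hI : CommonIndep M₁ M₂ I) (hC : ∀ v, σ v ∈ C ↔ v ∈ C)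
    (hσ : ∀ v ∈ C, ExchAdj M₁ M₂ I v (σ v)) (r : α → β)
    (hr : ∀ u ∈ C, ∀ v ∈ C, u ≠ v → ExchAdj M₁ M₂ I u (σ v) → r v < r u) :
    CommonIndep M₁ M₂ (I ∆ C) := by
  refine ⟨indep_symmDiff_of_rank hI.1 hC hσ r hr, ?_⟩
  -- Interchanging the matroids reverses the edges, hence also `σ` and the order of the ranks.
  have hC' (v : α) : σ.symm v ∈ C ↔ v ∈ C := by rw [← hC, σ.apply_symm_apply]
  have hσ' (v : α) (hv : v ∈ C) : ExchAdj M₂ M₁ I v (σ.symm v) := by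
    simpa only [exchAdj_swap, σ.apply_symm_apply] using hσ _ ((hC' v).2 hv)
  refine indep_symmDiff_of_rank hI.2 hC' hσ' (OrderDual.toDual ∘ r ∘ σ.symm) ?_
  intro u hu v hv huv hadj
  refine hr _ ((hC' v).2 hv) _ ((hC' u).2 hu) (σ.symm.injective.ne huv.symm) ?_
  rwa [σ.apply_symm_apply, ← exchAdj_swap]

theorem no_negative_cycle_general {W : α → ℤ} {k : ℕ} (hI : IsMinWtOfSize M₁ M₂ W k I) (l : List α)
    (hl : IsCycle (ExchAdj M₁ M₂ I) l) : 0 ≤ listW W I l := by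
  induction hn : l.length using Nat.strong_induction_on generalizing l with
  | _ n ih =>
  by_contra! hneg
  obtain ⟨hindep, rfl, hmin⟩ := hI
  have hC (v : α) : l.formPerm v ∈ l.toFinset ↔ v ∈ l.toFinset := by
    simp only [List.mem_toFinset, List.formPerm_mem_iff_mem]
  have hσ (v : α) (hv : v ∈ l.toFinset) : ExchAdj M₁ M₂ I v (l.formPerm v) :=
    hl.adj_formPerm (List.mem_toFinset.1 hv)
  have hcommon : CommonIndep M₁ M₂ (I ∆ l.toFinset) :=
    commonIndep_symmDiff_of_rank hindep hC hσ (prefixRank (exchWt W I) l)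
      fun u hu v hv huv hadj => hl.prefixRank_lt_of_chord hneg
        (fun l' hl' hlt => ih _ (hn ▸ hlt) l' hl' rfl)
        (List.mem_toFinset.1 hu) (List.mem_toFinset.1 hv) huv hadj
  have hcard : (I ∆ l.toFinset).card = I.card :=
    card_symmDiff_of_alternating hC fun v hv => (hσ v hv).mem_iff_notMem
  have hweight : setW W (I ∆ l.toFinset) = setW W I + listW W I l := by
    rw [setW_symmDiff, List.sum_toFinset _ hl.nodup, listW]
  have hle := hmin _ hcommon hcard
  linarith

end ExchangeGraph

/-- If `I_k` is a minimum-weight size-`k` common independent set of matroids `M₁`, `M₂`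
(not necessarily unique), then the exchange graph `𝓔(M₁,M₂,I_k)` contains no directed cycle
of negative weight with respect to the vertex weights `l`. -/
theorem no_negative_cycle {α : Type*} [Fintype α] [DecidableEq α]
    (M₁ M₂ : Matroid α) (hE₁ : M₁.E = Set.univ) (hE₂ : M₂.E = Set.univ)
    (W : α → ℤ) (k : ℕ) (Ik : Finset α) (hIk : IsMinWtOfSize M₁ M₂ W k Ik) :
    ∀ l : List α, IsCycle (ExchAdj M₁ M₂ Ik) l → 0 ≤ listW W Ik l :=
  no_negative_cycle_general hIk
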